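/- Let (X_i)_{i≥1} be i.i.d. standard normal, X_{(n)} = max_{1≤i≤n} X_i, and Y_n = a_n(X_{(n)} - b_n) with a_n = √(2 log n) and b_n = √(2 log n) - (log log n + log(4π))/(2√(2 log n)). Then the total variation distance between the law of Y_n and the standard Gumbel distribution Λ satisfies ‖L(Y_n) - Λ‖_TV = ((log log n)²/(8 e log n))(1 + o(1)) as n → ∞. -/

import Mathlib

open MeasureTheory Filter Real

/-- The standard normal cumulative distribution function. -/
noncomputable def stdNormalCDF (x : ℝ) : ℝ :=
  ∫ t in Set.Iic x, Real.exp (-t ^ 2 / 2) / Real.sqrt (2 * Real.pi)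

/-- The standard normal density. -/
noncomputable def stdNormalPDF (x : ℝ) : ℝ :=
  Real.exp (-x ^ 2 / 2) / Real.sqrt (2 * Real.pi)

/-- Scaling constant `a_n = √(2 log n)`. -/
noncomputable def aSeq (n : ℕ) : ℝ := Real.sqrt (2 * Real.log n)

/-- Centering constant
`b_n = √(2 log n) - (log log n + log (4π)) / (2 √(2 log n))`. -/
noncomputable def bSeq (n : ℕ) : ℝ :=
  aSeq n - (Real.log (Real.log n) + Real.log (4 * Real.pi)) / (2 * aSeq n)

/-- `c_n = log (√(4 π log n))`. -/
noncomputable def cSeq (n : ℕ) : ℝ := Real.log (Real.sqrt (4 * Real.pi * Real.log n))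

/-- The CDF of `Y_n = a_n (X_{(n)} - b_n)` where `X_{(n)}` is the maximum of `n`
i.i.d. standard normal random variables: `P(Y_n ≤ x) = Φ(b_n + x/a_n)^n`. -/
noncomputable def Fmax (n : ℕ) (x : ℝ) : ℝ := stdNormalCDF (bSeq n + x / aSeq n) ^ n

/-- The density of `Y_n = a_n (X_{(n)} - b_n)`:
`f_n(x) = n a_n⁻¹ φ(b_n + x/a_n) Φ(b_n + x/a_n)^{n-1}`. -/
noncomputable def fmax (n : ℕ) (x : ℝ) : ℝ :=
  n * (aSeq n)⁻¹ * stdNormalPDF (bSeq n + x / aSeq n) *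
    stdNormalCDF (bSeq n + x / aSeq n) ^ (n - 1)

/-- The density of the standard Gumbel distribution. -/
noncomputable def gumbelPDF (x : ℝ) : ℝ := Real.exp (-x - Real.exp (-x))

/-!
Let `g` be the Gumbel density and write the density of `Y_n` as `f_n = g · exp E_n`. The level
`u_n(x) = b_n + x / a_n` satisfies `u_n(x)² / 2 = log n - c_n + x + s` with
`s = (x - c_n)² / (4 log n)`, so Mills' ratio gives `n (1 - Φ(u_n(x))) ≈ exp (-x - s)` and hence
`E_n ≈ -s + exp (-x) (1 - exp (-s))`. Now `s ~ δ_n := c_n² / (4 log n)`, while the other errors are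
of order `c_n / log n = o(δ_n)`, so that `E_n / δ_n → exp (-x) - 1`.

Both densities have integral one, so `∫ |f_n - g| = 2 ∫ (g - f_n)⁺`, and passing to the limit needs
only the one-sided bound `g - f_n ≤ -E_n g`, together with `g - f_n ≤ g` for `x² > log n`.
Therefore `∫ |f_n - g| / δ_n → 2 ∫ (g (1 - exp (-x)))⁺ = 2 g(0) = 2 / e`, the integrand on `x > 0`
being `-g'`, and `δ_n ~ (log log n)² / (16 log n)`.
-/

section Analysis

open Set
open scoped Topology

variable {ι : Type*} {l : Filter ι}

theorem tendsto_integral_abs_sub_div [l.IsCountablyGenerated] {α : Type*} [MeasurableSpace α]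
    {μ : Measure α} {f : ι → α → ℝ} {g k bound : α → ℝ} {δ : ι → ℝ}
    (hf : ∀ᶠ i in l, Integrable (f i) μ) (hg : Integrable g μ)
    (hfg : ∀ᶠ i in l, ∫ x, f i x ∂μ = ∫ x, g x ∂μ) (hδ : ∀ᶠ i in l, 0 < δ i)
    (h_bound : ∀ᶠ i in l, ∀ᵐ x ∂μ, (g x - f i x)⁺ ≤ δ i * bound x)
    (bound_integrable : Integrable bound μ)
    (h_lim : ∀ᵐ x ∂μ, Tendsto (fun i => (g x - f i x) / δ i) l (𝓝 (k x))) :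
    Tendsto (fun i => (∫ x, |f i x - g x| ∂μ) / δ i) l (𝓝 (2 * ∫ x, (k x)⁺ ∂μ)) := by
  have h_posPart : Tendsto (fun i => ∫ x, (g x - f i x)⁺ / δ i ∂μ) l (𝓝 (∫ x, (k x)⁺ ∂μ)) := by
    refine tendsto_integral_filter_of_dominated_convergence bound ?_ ?_ bound_integrable ?_
    · filter_upwards [hf] with i hfi
      exact ((hg.sub hfi).pos_part.div_const _).aestronglyMeasurable
    · filter_upwards [h_bound, hδ] with i hi hδi
      filter_upwards [hi] with x hx
      rw [Real.norm_of_nonneg (div_nonneg (posPart_nonneg _) hδi.le), div_le_iff₀' hδi]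
      exact hx
    · filter_upwards [h_lim] with x hx
      refine (hx.max (tendsto_const_nhds (x := (0 : ℝ)))).congr' ?_
      filter_upwards [hδ] with i hδi
      rw [posPart_def, ← max_div_div_right hδi.le, zero_div]
  refine (h_posPart.const_mul 2).congr' ?_
  filter_upwards [hf, hfg] with i hfi hfgi
  have h_abs : ∫ x, |g x - f i x| ∂μ = 2 * ∫ x, (g x - f i x)⁺ ∂μ := by
    have h := integral_abs_eq_two_mul_integral_posPart_sub_integral (hg.sub hfi)
    simp only [Pi.sub_apply] at h
    rw [h, integral_sub hg hfi, hfgi, sub_self, sub_zero]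
  simp_rw [abs_sub_comm (f i _), h_abs, integral_div, mul_div_assoc]

theorem tendsto_exp_sub_one_div {E δ : ι → ℝ} {c : ℝ} (hδ : Tendsto δ l (𝓝[≠] 0))
    (hE : Tendsto (fun i => E i / δ i) l (𝓝 c)) :
    Tendsto (fun i => (exp (E i) - 1) / δ i) l (𝓝 c) := by
  have hE_zero : Tendsto E l (𝓝 0) := by
    have h := hE.mul (hδ.mono_right nhdsWithin_le_nhds)
    rw [mul_zero] at h
    refine h.congr' ?_
    filter_upwards [hδ.eventually_mem self_mem_nhdsWithin] with i hi
    exact div_mul_cancel₀ _ hi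
  have h_slope : Tendsto (fun i => dslope exp 0 (E i)) l (𝓝 1) := by
    have h := (continuousAt_dslope_same.2 differentiableAt_exp).tendsto.comp hE_zero
    rwa [dslope_same, Real.deriv_exp, exp_zero] at h
  have h_mul := hE.mul h_slope
  rw [mul_one] at h_mul
  refine h_mul.congr fun i => ?_
  have h := sub_smul_dslope exp 0 (E i)
  rw [sub_zero, smul_eq_mul, exp_zero] at h
  rw [← h, mul_div_right_comm]

theorem integrable_of_hasDerivAt_of_nonneg {F f : ℝ → ℝ} {m n : ℝ}
    (hderiv : ∀ x, HasDerivAt F (f x) x) (hf : ∀ x, 0 ≤ f x)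
    (hbot : Tendsto F atBot (𝓝 m)) (htop : Tendsto F atTop (𝓝 n)) : Integrable f := by
  have hfi (a b : ℝ) : IntegrableOn f (Ioc a b) :=
    intervalIntegral.integrableOn_deriv_of_nonneg
      (fun x _ => (hderiv x).continuousAt.continuousWithinAt) (fun x _ => hderiv x)
      fun x _ => hf x
  refine integrable_of_intervalIntegral_norm_tendsto (n - m) (fun i : ℝ => hfi (-i) i)
    tendsto_neg_atTop_atBot tendsto_id
    ((htop.sub (hbot.comp tendsto_neg_atTop_atBot)).congr fun i => ?_)
  simp_rw [Real.norm_of_nonneg (hf _)]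
  exact (intervalIntegral.integral_eq_sub_of_hasDerivAt (fun x _ => hderiv x)
    ⟨hfi _ _, hfi _ _⟩).symm

theorem hasDerivAt_integral_Iic {E : Type*} [NormedAddCommGroup E] [NormedSpace ℝ E]
    [CompleteSpace E] {f : ℝ → E} {x : ℝ} (hf : Integrable f) (hx : ContinuousAt f x) :
    HasDerivAt (fun y => ∫ t in Iic y, f t) (f x) x := by
  have h_split : (fun y => ∫ t in Iic y, f t)
      = fun y => (∫ t in Iic x, f t) + ∫ t in x..y, f t := by
    funext y
    rw [← intervalIntegral.integral_Iic_sub_Iic hf.integrableOn hf.integrableOn,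
      add_sub_cancel]
  rw [h_split]
  exact (intervalIntegral.integral_hasDerivAt_right hf.intervalIntegrable
    hf.aestronglyMeasurable.stronglyMeasurableAtFilter hx).const_add _

theorem abs_sub_one_mul_log_one_sub_add_le {m q : ℝ} (hm : 1 ≤ m) (hq₀ : 0 ≤ q) (hq : q ≤ 1 / 2) :
    |(m - 1) * log (1 - q) + m * q| ≤ q + 2 * m * q ^ 2 := by
  have h_log : |q + log (1 - q)| ≤ 2 * q ^ 2 := by
    have h := abs_log_sub_add_sum_range_le (x := q) (by rw [abs_of_nonneg hq₀]; linarith) 1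
    simp only [Finset.sum_range_one, abs_of_nonneg hq₀] at h
    norm_num at h
    refine h.trans ?_
    rw [div_le_iff₀ (by linarith)]
    nlinarith [sq_nonneg q]
  calc |(m - 1) * log (1 - q) + m * q| = |q + (m - 1) * (q + log (1 - q))| := by ring_nf
    _ ≤ |q| + |(m - 1) * (q + log (1 - q))| := abs_add_le _ _
    _ = q + (m - 1) * |q + log (1 - q)| := by
      rw [abs_mul, abs_of_nonneg hq₀, abs_of_nonneg (sub_nonneg.2 hm)]
    _ ≤ q + m * (2 * q ^ 2) := by gcongr; linarith
    _ = q + 2 * m * q ^ 2 := by ring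

end Analysis

section StandardNormal

open Set ProbabilityTheory
open scoped Topology

lemma stdNormalPDF_eq_gaussianPDFReal : stdNormalPDF = gaussianPDFReal 0 1 := by
  ext x
  simp [stdNormalPDF, gaussianPDFReal, div_eq_inv_mul]

lemma stdNormalPDF_pos (x : ℝ) : 0 < stdNormalPDF x := by
  unfold stdNormalPDF
  positivity

lemma continuous_stdNormalPDF : Continuous stdNormalPDF := by
  unfold stdNormalPDF
  fun_prop

lemma integrable_stdNormalPDF : Integrable stdNormalPDF :=
  stdNormalPDF_eq_gaussianPDFReal ▸ integrable_gaussianPDFReal 0 1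

lemma hasDerivAt_stdNormalPDF (x : ℝ) : HasDerivAt stdNormalPDF (-x * stdNormalPDF x) x := by
  have h : HasDerivAt (fun y : ℝ => -y ^ 2 / 2) (-x) x :=
    ((hasDerivAt_pow 2 x).neg.div_const 2).congr_deriv (by norm_num; ring)
  exact (h.exp.div_const _).congr_deriv (by unfold stdNormalPDF; ring)

lemma tendsto_stdNormalPDF_atTop : Tendsto stdNormalPDF atTop (𝓝 0) := by
  have h : Tendsto (fun x : ℝ => -x ^ 2 / 2) atTop atBot :=
    (tendsto_neg_atTop_atBot.comp (tendsto_pow_atTop two_ne_zero)).atBot_div_const two_pos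
  have h_div := (tendsto_exp_atBot.comp h).div_const (√(2 * π))
  rw [zero_div] at h_div
  exact h_div

lemma integrable_mul_stdNormalPDF : Integrable fun x => x * stdNormalPDF x := by
  refine ((integrable_mul_exp_neg_mul_sq (b := 1 / 2) (by norm_num)).div_const
    (√(2 * π))).congr (ae_of_all _ fun x => ?_)
  simp only [stdNormalPDF]
  ring_nf

lemma stdNormalCDF_eq_cdf : stdNormalCDF = cdf (gaussianReal 0 1) := by
  ext x
  rw [cdf_eq_real, measureReal_def, gaussianReal_apply_eq_integral _ one_ne_zero,
    ENNReal.toReal_ofReal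
      (setIntegral_nonneg measurableSet_Iic fun t _ => gaussianPDFReal_nonneg 0 1 t),
    ← stdNormalPDF_eq_gaussianPDFReal]
  rfl

lemma tendsto_stdNormalCDF_atTop : Tendsto stdNormalCDF atTop (𝓝 1) :=
  stdNormalCDF_eq_cdf ▸ tendsto_cdf_atTop _

lemma tendsto_stdNormalCDF_atBot : Tendsto stdNormalCDF atBot (𝓝 0) :=
  stdNormalCDF_eq_cdf ▸ tendsto_cdf_atBot _

lemma stdNormalCDF_le_one (x : ℝ) : stdNormalCDF x ≤ 1 :=
  stdNormalCDF_eq_cdf ▸ cdf_le_one _ x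

lemma hasDerivAt_stdNormalCDF (x : ℝ) : HasDerivAt stdNormalCDF (stdNormalPDF x) x :=
  hasDerivAt_integral_Iic integrable_stdNormalPDF continuous_stdNormalPDF.continuousAt

lemma stdNormalCDF_pos (x : ℝ) : 0 < stdNormalCDF x := by
  have h_nonneg : 0 ≤ stdNormalCDF (x - 1) := stdNormalCDF_eq_cdf ▸ cdf_nonneg _ _
  exact h_nonneg.trans_lt
    (strictMono_of_hasDerivAt_pos hasDerivAt_stdNormalCDF stdNormalPDF_pos (sub_one_lt x))

lemma one_sub_stdNormalCDF (x : ℝ) : 1 - stdNormalCDF x = ∫ t in Ioi x, stdNormalPDF t :=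
  (integral_Ioi_of_hasDerivAt_of_tendsto' (fun y _ => hasDerivAt_stdNormalCDF y)
    integrable_stdNormalPDF.integrableOn tendsto_stdNormalCDF_atTop).symm

lemma mul_one_sub_stdNormalCDF_le (u : ℝ) : u * (1 - stdNormalCDF u) ≤ stdNormalPDF u := by
  have h_deriv : ∀ x ∈ Ici u, HasDerivAt (fun y => -stdNormalPDF y) (x * stdNormalPDF x) x :=
    fun x _ => (hasDerivAt_stdNormalPDF x).neg.congr_deriv (by ring)
  have h_ftc : ∫ x in Ioi u, x * stdNormalPDF x = stdNormalPDF u := by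
    rw [integral_Ioi_of_hasDerivAt_of_tendsto' h_deriv integrable_mul_stdNormalPDF.integrableOn
      tendsto_stdNormalPDF_atTop.neg, neg_zero, zero_sub, neg_neg]
  rw [one_sub_stdNormalCDF, ← integral_const_mul, ← h_ftc]
  refine setIntegral_mono_on (integrable_stdNormalPDF.integrableOn.const_mul u)
    integrable_mul_stdNormalPDF.integrableOn measurableSet_Ioi fun x hx => ?_
  exact mul_le_mul_of_nonneg_right (mem_Ioi.1 hx).le (stdNormalPDF_pos x).le

lemma stdNormalPDF_div_le {u : ℝ} (hu : 0 < u) :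
    stdNormalPDF u / u ≤ (1 + 1 / u ^ 2) * (1 - stdNormalCDF u) := by
  have h_deriv : ∀ x ∈ Ici u, HasDerivAt (fun y => -(stdNormalPDF y / y))
      ((1 + 1 / x ^ 2) * stdNormalPDF x) x := by
    intro x hx
    have hx₀ : x ≠ 0 := (hu.trans_le hx).ne'
    refine ((hasDerivAt_stdNormalPDF x).div (hasDerivAt_id x) hx₀).neg.congr_deriv ?_
    simp only [id]
    field_simp
    ring
  have h_nonneg : ∀ x ∈ Ioi u, 0 ≤ (1 + 1 / x ^ 2) * stdNormalPDF x := fun x _ =>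
    mul_nonneg (by positivity) (stdNormalPDF_pos x).le
  have h_lim : Tendsto (fun y => -(stdNormalPDF y / y)) atTop (𝓝 0) := by
    simpa using (tendsto_stdNormalPDF_atTop.div_atTop tendsto_id).neg
  have h_ftc : ∫ x in Ioi u, (1 + 1 / x ^ 2) * stdNormalPDF x = stdNormalPDF u / u := by
    rw [integral_Ioi_of_hasDerivAt_of_nonneg' h_deriv h_nonneg h_lim, zero_sub, neg_neg]
  rw [one_sub_stdNormalCDF, ← integral_const_mul, ← h_ftc]
  refine setIntegral_mono_on (integrableOn_Ioi_deriv_of_nonneg' h_deriv h_nonneg h_lim)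
    (integrable_stdNormalPDF.integrableOn.const_mul _) measurableSet_Ioi fun x hx => ?_
  have := stdNormalPDF_pos x
  have := mem_Ioi.1 hx
  gcongr

theorem abs_mul_one_sub_stdNormalCDF_sub_le {u : ℝ} (hu : 0 < u) :
    |u * (1 - stdNormalCDF u) - stdNormalPDF u| ≤ stdNormalPDF u / u ^ 2 := by
  have h_upper := mul_one_sub_stdNormalCDF_le u
  have h_lower : stdNormalPDF u
      ≤ u * (1 - stdNormalCDF u) + u * (1 - stdNormalCDF u) / u ^ 2 := by
    have h := stdNormalPDF_div_le hu
    rw [div_le_iff₀ hu] at h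
    exact h.trans_eq (by ring)
  have h_err : u * (1 - stdNormalCDF u) / u ^ 2 ≤ stdNormalPDF u / u ^ 2 := by gcongr
  have := div_nonneg (stdNormalPDF_pos u).le (sq_nonneg u)
  rw [abs_le]
  constructor <;> linarith

end StandardNormal

section Gumbel

open Set
open scoped Topology

lemma gumbelPDF_pos (x : ℝ) : 0 < gumbelPDF x := exp_pos _

lemma continuous_gumbelPDF : Continuous gumbelPDF := by
  unfold gumbelPDF
  fun_prop

lemma gumbelPDF_eq_mul (x : ℝ) : gumbelPDF x = exp (-x) * exp (-exp (-x)) := by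
  rw [gumbelPDF, sub_eq_add_neg, exp_add]

lemma hasDerivAt_exp_neg_exp_neg (x : ℝ) :
    HasDerivAt (fun y => exp (-exp (-y))) (gumbelPDF x) x :=
  (hasDerivAt_neg x).exp.neg.exp.congr_deriv (by rw [gumbelPDF_eq_mul, Pi.neg_apply]; ring)

lemma hasDerivAt_gumbelPDF (x : ℝ) :
    HasDerivAt gumbelPDF (gumbelPDF x * (exp (-x) - 1)) x :=
  ((hasDerivAt_neg x).sub (hasDerivAt_neg x).exp).exp.congr_deriv (by
    simp only [gumbelPDF, Pi.sub_apply]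
    ring)

lemma tendsto_exp_neg_exp_neg_atTop : Tendsto (fun x : ℝ => exp (-exp (-x))) atTop (𝓝 1) := by
  simpa using! (continuous_exp.tendsto _).comp tendsto_exp_neg_atTop_nhds_zero.neg

lemma tendsto_exp_neg_exp_neg_atBot : Tendsto (fun x : ℝ => exp (-exp (-x))) atBot (𝓝 0) :=
  tendsto_exp_neg_atTop_nhds_zero.comp (tendsto_exp_atTop.comp tendsto_neg_atBot_atTop)

lemma tendsto_gumbelPDF_atTop : Tendsto gumbelPDF atTop (𝓝 0) := by
  simpa [← gumbelPDF_eq_mul] using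
    tendsto_exp_neg_atTop_nhds_zero.mul tendsto_exp_neg_exp_neg_atTop

lemma integrable_gumbelPDF : Integrable gumbelPDF :=
  integrable_of_hasDerivAt_of_nonneg hasDerivAt_exp_neg_exp_neg (fun x => (gumbelPDF_pos x).le)
    tendsto_exp_neg_exp_neg_atBot tendsto_exp_neg_exp_neg_atTop

lemma integral_gumbelPDF : ∫ x, gumbelPDF x = 1 := by
  rw [integral_of_hasDerivAt_of_tendsto hasDerivAt_exp_neg_exp_neg integrable_gumbelPDF
    tendsto_exp_neg_exp_neg_atBot tendsto_exp_neg_exp_neg_atTop, sub_zero]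

/- The substitution `y = exp (-x)` turns this into the Euler integral of `Γ (1 - t)`. -/
theorem integrable_exp_mul_gumbelPDF {t : ℝ} (ht : t < 1) :
    Integrable fun x => exp (t * x) * gumbelPDF x := by
  have h_image : (fun x : ℝ => exp (-x)) '' univ = Ioi 0 := by
    rw [image_univ, ← range_exp]
    exact neg_surjective.range_comp exp
  have h_gamma := GammaIntegral_convergent (sub_pos.2 ht)
  rw [← h_image, integrableOn_image_iff_integrableOn_abs_deriv_smul MeasurableSet.univ
    (fun x _ => (hasDerivAt_neg x).exp.hasDerivWithinAt)
    (exp_injective.comp neg_injective).injOn, integrableOn_univ] at h_gamma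
  refine h_gamma.congr (ae_of_all _ fun x => ?_)
  simp only [mul_neg_one, abs_neg, abs_exp, smul_eq_mul, gumbelPDF, ← exp_mul, ← exp_add]
  ring_nf

lemma integral_posPart_gumbelPDF_mul_one_sub_exp_neg :
    ∫ x, (gumbelPDF x * (1 - exp (-x)))⁺ = exp (-1) := by
  have h_nonneg : ∀ x ∈ Ioi (0 : ℝ), 0 ≤ gumbelPDF x * (1 - exp (-x)) := fun x hx =>
    mul_nonneg (gumbelPDF_pos x).le (by simpa using (mem_Ioi.1 hx).le)
  have h_nonpos : ∀ x ∉ Ioi (0 : ℝ), (gumbelPDF x * (1 - exp (-x)))⁺ = 0 := fun x hx =>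
    posPart_eq_zero.2
      (mul_nonpos_of_nonneg_of_nonpos (gumbelPDF_pos x).le (by simpa using! hx))
  have h_deriv : ∀ x ∈ Ici (0 : ℝ),
      HasDerivAt (fun y => -gumbelPDF y) (gumbelPDF x * (1 - exp (-x))) x := fun x _ =>
    (hasDerivAt_gumbelPDF x).neg.congr_deriv (by ring)
  calc ∫ x, (gumbelPDF x * (1 - exp (-x)))⁺
      = ∫ x in Ioi 0, (gumbelPDF x * (1 - exp (-x)))⁺ :=
        (setIntegral_eq_integral_of_forall_compl_eq_zero h_nonpos).symm
    _ = ∫ x in Ioi 0, gumbelPDF x * (1 - exp (-x)) :=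
        setIntegral_congr_fun measurableSet_Ioi fun x hx => posPart_of_nonneg (h_nonneg x hx)
    _ = -0 - -gumbelPDF 0 :=
        integral_Ioi_of_hasDerivAt_of_nonneg' h_deriv h_nonneg tendsto_gumbelPDF_atTop.neg
    _ = exp (-1) := by simp [gumbelPDF]

/-- The weight dominating, up to a constant and the rate of convergence, how far the density of
`Y_n` falls below the Gumbel density relative to the latter: it is polynomial as `x → ∞` and
exponential as `x → -∞`. -/
noncomputable def gumbelWeight (x : ℝ) : ℝ := ((1 + |x|) * (1 + exp (-x))) ^ 2

lemma gumbelWeight_le (x : ℝ) :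
    gumbelWeight x ≤ 16 * exp (1 / 2) *
      (exp (1 / 2 * x) + exp (-1 / 2 * x) + exp (-3 / 2 * x) + exp (-5 / 2 * x)) := by
  have h_poly : (1 + |x|) ^ 2 ≤ 8 * exp (1 / 2) * (exp (1 / 2 * x) + exp (-1 / 2 * x)) := by
    have h_sq : (1 + |x|) ^ 2 ≤ 8 * exp ((1 + |x|) / 2) := by
      have h := pow_div_factorial_le_exp ((1 + |x|) / 2) (by positivity) 2
      norm_num [div_pow] at h
      linarith
    have h_abs : exp (1 / 2 * |x|) ≤ exp (1 / 2 * x) + exp (-1 / 2 * x) := by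
      rcases abs_choice x with h | h <;> rw [h]
      · exact le_add_of_nonneg_right (exp_pos _).le
      · rw [mul_neg, ← neg_mul, neg_div']
        exact le_add_of_nonneg_left (exp_pos _).le
    calc (1 + |x|) ^ 2 ≤ 8 * exp ((1 + |x|) / 2) := h_sq
      _ = 8 * exp (1 / 2) * exp (1 / 2 * |x|) := by rw [mul_assoc, ← exp_add]; ring_nf
      _ ≤ _ := by gcongr
  have h_exp : (1 + exp (-x)) ^ 2 ≤ 2 * (1 + exp (-2 * x)) := by
    have h : exp (-2 * x) = exp (-x) ^ 2 := by rw [← exp_nat_mul]; ring_nf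
    rw [h]
    nlinarith [sq_nonneg (1 - exp (-x))]
  calc gumbelWeight x = (1 + |x|) ^ 2 * (1 + exp (-x)) ^ 2 := mul_pow _ _ _
    _ ≤ 8 * exp (1 / 2) * (exp (1 / 2 * x) + exp (-1 / 2 * x)) * (2 * (1 + exp (-2 * x))) := by
      gcongr
    _ = 16 * exp (1 / 2) * (exp (1 / 2 * x) + exp (-1 / 2 * x)
        + exp (1 / 2 * x) * exp (-2 * x) + exp (-1 / 2 * x) * exp (-2 * x)) := by ring
    _ = _ := by simp only [← exp_add]; ring_nf

lemma integrable_gumbelWeight_mul_gumbelPDF :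
    Integrable fun x => gumbelWeight x * gumbelPDF x := by
  have h_exp {t : ℝ} (ht : t < 1) := integrable_exp_mul_gumbelPDF ht
  have h_bound := ((((h_exp (t := 1 / 2) (by norm_num)).add (h_exp (t := -1 / 2) (by norm_num))).add
    (h_exp (t := -3 / 2) (by norm_num))).add (h_exp (t := -5 / 2) (by norm_num))).const_mul
    (16 * exp (1 / 2))
  refine h_bound.mono' (Continuous.aestronglyMeasurable ?_) (ae_of_all _ fun x => ?_)
  · unfold gumbelWeight
    have := continuous_gumbelPDF
    fun_prop
  · have h_nonneg : 0 ≤ gumbelWeight x * gumbelPDF x :=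
      mul_nonneg (sq_nonneg _) (gumbelPDF_pos x).le
    rw [Real.norm_of_nonneg h_nonneg]
    refine (mul_le_mul_of_nonneg_right (gumbelWeight_le x) (gumbelPDF_pos x).le).trans_eq ?_
    simp only [Pi.add_apply]
    ring

end Gumbel

section NormalizedMaximum

open scoped Topology

variable {n : ℕ}

/-- The level `u_n(x) = b_n + x / a_n`, for which `Y_n ≤ x` means `X_{(n)} ≤ u_n(x)`. -/
noncomputable def gumbelLevel (n : ℕ) (x : ℝ) : ℝ := bSeq n + x / aSeq n

/-- The relative deviation of the level `u_n(x)` from `a_n`. -/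
noncomputable def levelShift (n : ℕ) (x : ℝ) : ℝ := (x - cSeq n) / (2 * log n)

/-- The part of `u_n(x)² / 2 = log n - c_n + x + (x - c_n)² / (4 log n)` that is quadratic in `x`.
It is the dominant error in the Gumbel approximation. -/
noncomputable def quadTerm (n : ℕ) (x : ℝ) : ℝ := (x - cSeq n) ^ 2 / (4 * log n)

/-- The expected number `n (1 - Φ(u_n(x)))` of observations above the level `u_n(x)`. -/
noncomputable def meanExceedance (n : ℕ) (x : ℝ) : ℝ := n * (1 - stdNormalCDF (gumbelLevel n x))

/-- The approximation `n φ(u_n(x)) / a_n` of `meanExceedance n x` given by Mills' ratio. -/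
noncomputable def exceedanceApprox (n : ℕ) (x : ℝ) : ℝ := exp (-x) * exp (-quadTerm n x)

/-- The logarithm of the density of `Y_n` relative to the Gumbel law. -/
noncomputable def logRatio (n : ℕ) (x : ℝ) : ℝ := log (fmax n x / gumbelPDF x)

lemma log_natCast_pos (hn : 1 < n) : 0 < log n := log_pos (mod_cast hn)

lemma aSeq_pos (hn : 1 < n) : 0 < aSeq n := by
  have := log_natCast_pos hn
  unfold aSeq
  positivity

lemma aSeq_sq (n : ℕ) : aSeq n ^ 2 = 2 * log n :=
  sq_sqrt (mul_nonneg zero_le_two (log_natCast_nonneg n))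

lemma two_mul_cSeq (hn : 1 < n) : 2 * cSeq n = log (log n) + log (4 * π) := by
  have h_log := log_natCast_pos hn
  rw [cSeq, log_sqrt (by positivity), log_mul (by positivity) h_log.ne']
  ring

lemma exp_cSeq (hn : 1 < n) : exp (cSeq n) = aSeq n * √(2 * π) := by
  have h_log := log_natCast_pos hn
  rw [cSeq, exp_log (by positivity), aSeq, ← sqrt_mul (by positivity)]
  ring_nf

lemma gumbelLevel_eq (hn : 1 < n) (x : ℝ) :
    gumbelLevel n x = aSeq n * (1 + levelShift n x) := by
  have h_pos := aSeq_pos hn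
  rw [gumbelLevel, bSeq, levelShift, ← two_mul_cSeq hn, ← aSeq_sq n]
  field_simp
  ring

lemma gumbelLevel_sq_div_two (hn : 1 < n) (x : ℝ) :
    gumbelLevel n x ^ 2 / 2 = log n - cSeq n + x + quadTerm n x := by
  have h_log := log_natCast_pos hn
  rw [gumbelLevel_eq hn, mul_pow, aSeq_sq n, levelShift, quadTerm]
  field_simp
  ring

lemma quadTerm_nonneg (n : ℕ) (x : ℝ) : 0 ≤ quadTerm n x :=
  div_nonneg (sq_nonneg _) (mul_nonneg zero_le_four (log_natCast_nonneg n))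

lemma exceedanceApprox_pos (n : ℕ) (x : ℝ) : 0 < exceedanceApprox n x :=
  mul_pos (exp_pos _) (exp_pos _)

lemma exceedanceApprox_le (n : ℕ) (x : ℝ) : exceedanceApprox n x ≤ exp (-x) :=
  mul_le_of_le_one_right (exp_pos _).le (exp_le_one_iff.2 (neg_nonpos.2 (quadTerm_nonneg n x)))

lemma meanExceedance_nonneg (n : ℕ) (x : ℝ) : 0 ≤ meanExceedance n x :=
  mul_nonneg n.cast_nonneg (sub_nonneg.2 (stdNormalCDF_le_one _))

lemma natCast_mul_stdNormalPDF_gumbelLevel (hn : 1 < n) (x : ℝ) :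
    n * stdNormalPDF (gumbelLevel n x) = aSeq n * exceedanceApprox n x := by
  have h_exponent : -gumbelLevel n x ^ 2 / 2 = -log n + cSeq n + -x + -quadTerm n x := by
    rw [neg_div, gumbelLevel_sq_div_two hn]
    ring
  have h_n : (0 : ℝ) < n := by positivity
  rw [stdNormalPDF, exceedanceApprox, h_exponent, exp_add, exp_add, exp_add, exp_neg (log n),
    exp_log h_n, exp_cSeq hn]
  field_simp

lemma fmax_eq (hn : 1 < n) (x : ℝ) :
    fmax n x = exceedanceApprox n x * stdNormalCDF (gumbelLevel n x) ^ (n - 1) := by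
  have h_pos := aSeq_pos hn
  change n * (aSeq n)⁻¹ * stdNormalPDF (gumbelLevel n x) *
    stdNormalCDF (gumbelLevel n x) ^ (n - 1) = _
  rw [mul_right_comm (n : ℝ), natCast_mul_stdNormalPDF_gumbelLevel hn, mul_comm (aSeq n),
    mul_inv_cancel_right₀ h_pos.ne']

lemma fmax_pos (hn : 1 < n) (x : ℝ) : 0 < fmax n x := by
  have := stdNormalCDF_pos (gumbelLevel n x)
  have := exceedanceApprox_pos n x
  rw [fmax_eq hn]
  positivity

lemma fmax_eq_gumbelPDF_mul_exp_logRatio (hn : 1 < n) (x : ℝ) :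
    fmax n x = gumbelPDF x * exp (logRatio n x) := by
  rw [logRatio, exp_log (div_pos (fmax_pos hn x) (gumbelPDF_pos x)),
    mul_div_cancel₀ _ (gumbelPDF_pos x).ne']

lemma logRatio_eq (hn : 1 < n) (x : ℝ) :
    logRatio n x =
      -quadTerm n x + exp (-x) + (n - 1) * log (stdNormalCDF (gumbelLevel n x)) := by
  have h_cdf := stdNormalCDF_pos (gumbelLevel n x)
  rw [logRatio, log_div (fmax_pos hn x).ne' (gumbelPDF_pos x).ne', fmax_eq hn,
    log_mul (exceedanceApprox_pos n x).ne' (by positivity), exceedanceApprox,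
    log_mul (exp_ne_zero _) (exp_ne_zero _), log_pow, Nat.cast_pred (zero_lt_one.trans hn),
    gumbelPDF]
  simp only [log_exp]
  ring

lemma hasDerivAt_Fmax (n : ℕ) (x : ℝ) : HasDerivAt (Fmax n) (fmax n x) x := by
  have h_level : HasDerivAt (gumbelLevel n) (1 / aSeq n) x :=
    ((hasDerivAt_id x).div_const _).const_add _
  refine (((hasDerivAt_stdNormalCDF _).comp x h_level).pow n).congr_deriv ?_
  simp only [fmax, Function.comp_apply, gumbelLevel]
  ring

lemma tendsto_gumbelLevel_atTop (hn : 1 < n) : Tendsto (gumbelLevel n) atTop atTop :=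
  tendsto_atTop_add_const_left _ _ (tendsto_id.atTop_div_const (aSeq_pos hn))

lemma tendsto_gumbelLevel_atBot (hn : 1 < n) : Tendsto (gumbelLevel n) atBot atBot :=
  tendsto_atBot_add_const_left _ _ (tendsto_id.atBot_div_const (aSeq_pos hn))

lemma tendsto_Fmax_atTop (hn : 1 < n) : Tendsto (Fmax n) atTop (𝓝 1) := by
  have h := (tendsto_stdNormalCDF_atTop.comp (tendsto_gumbelLevel_atTop hn)).pow n
  rwa [one_pow] at h

lemma tendsto_Fmax_atBot (hn : 1 < n) : Tendsto (Fmax n) atBot (𝓝 0) := by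
  have h := (tendsto_stdNormalCDF_atBot.comp (tendsto_gumbelLevel_atBot hn)).pow n
  rwa [zero_pow (zero_lt_one.trans hn).ne'] at h

lemma integrable_fmax (hn : 1 < n) : Integrable (fmax n) :=
  integrable_of_hasDerivAt_of_nonneg (hasDerivAt_Fmax n) (fun x => (fmax_pos hn x).le)
    (tendsto_Fmax_atBot hn) (tendsto_Fmax_atTop hn)

lemma integral_fmax (hn : 1 < n) : ∫ x, fmax n x = 1 := by
  rw [integral_of_hasDerivAt_of_tendsto (hasDerivAt_Fmax n) (integrable_fmax hn)
    (tendsto_Fmax_atBot hn) (tendsto_Fmax_atTop hn), sub_zero]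

lemma aSeq_mul_one_add_levelShift_mul_meanExceedance (hn : 1 < n) (x : ℝ) :
    aSeq n * ((1 + levelShift n x) * meanExceedance n x)
      = n * (gumbelLevel n x * (1 - stdNormalCDF (gumbelLevel n x))) := by
  rw [← mul_assoc, ← gumbelLevel_eq hn, meanExceedance]
  ring

lemma one_add_levelShift_mul_meanExceedance_le (hn : 1 < n) (x : ℝ) :
    (1 + levelShift n x) * meanExceedance n x ≤ exceedanceApprox n x := by
  refine le_of_mul_le_mul_left ?_ (aSeq_pos hn)
  rw [aSeq_mul_one_add_levelShift_mul_meanExceedance hn,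
    ← natCast_mul_stdNormalPDF_gumbelLevel hn]
  gcongr
  exact mul_one_sub_stdNormalCDF_le _

lemma abs_one_add_levelShift_mul_meanExceedance_sub_le (hn : 1 < n) {x : ℝ}
    (hx : 0 < gumbelLevel n x) :
    |(1 + levelShift n x) * meanExceedance n x - exceedanceApprox n x|
      ≤ exceedanceApprox n x / gumbelLevel n x ^ 2 := by
  refine le_of_mul_le_mul_left ?_ (aSeq_pos hn)
  calc aSeq n * |(1 + levelShift n x) * meanExceedance n x - exceedanceApprox n x|
      = |aSeq n * ((1 + levelShift n x) * meanExceedance n x)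
          - aSeq n * exceedanceApprox n x| := by
        rw [← mul_sub, abs_mul, abs_of_pos (aSeq_pos hn)]
    _ = n * |gumbelLevel n x * (1 - stdNormalCDF (gumbelLevel n x))
          - stdNormalPDF (gumbelLevel n x)| := by
        rw [aSeq_mul_one_add_levelShift_mul_meanExceedance hn,
          ← natCast_mul_stdNormalPDF_gumbelLevel hn, ← mul_sub, abs_mul, Nat.abs_cast]
    _ ≤ n * (stdNormalPDF (gumbelLevel n x) / gumbelLevel n x ^ 2) := by
        gcongr
        exact abs_mul_one_sub_stdNormalCDF_sub_le hx
    _ = aSeq n * (exceedanceApprox n x / gumbelLevel n x ^ 2) := by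
        rw [← mul_div_assoc, natCast_mul_stdNormalPDF_gumbelLevel hn, mul_div_assoc]

lemma half_le_one_add_levelShift {x : ℝ} (hw : |levelShift n x| ≤ 1 / 2) :
    1 / 2 ≤ 1 + levelShift n x := by
  linarith [(abs_le.1 hw).1]

lemma gumbelLevel_pos (hn : 1 < n) {x : ℝ} (hw : |levelShift n x| ≤ 1 / 2) :
    0 < gumbelLevel n x := by
  rw [gumbelLevel_eq hn]
  exact mul_pos (aSeq_pos hn) (one_half_pos.trans_le (half_le_one_add_levelShift hw))

lemma half_log_le_gumbelLevel_sq (hn : 1 < n) {x : ℝ} (hw : |levelShift n x| ≤ 1 / 2) :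
    log n / 2 ≤ gumbelLevel n x ^ 2 := by
  have h_half := half_le_one_add_levelShift hw
  have h_sq : (1 / 2) ^ 2 ≤ (1 + levelShift n x) ^ 2 := by gcongr
  rw [gumbelLevel_eq hn, mul_pow, aSeq_sq n]
  linarith [mul_le_mul_of_nonneg_left h_sq (log_natCast_pos hn).le]

lemma meanExceedance_le (hn : 1 < n) {x : ℝ} (hw : |levelShift n x| ≤ 1 / 2) :
    meanExceedance n x ≤ 2 * exp (-x) := by
  have h_half : 1 / 2 * meanExceedance n x ≤ (1 + levelShift n x) * meanExceedance n x :=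
    mul_le_mul_of_nonneg_right (half_le_one_add_levelShift hw) (meanExceedance_nonneg n x)
  linarith [one_add_levelShift_mul_meanExceedance_le hn x, exceedanceApprox_le n x]

lemma abs_meanExceedance_sub_le (hn : 1 < n) {x : ℝ} (hw : |levelShift n x| ≤ 1 / 2) :
    |meanExceedance n x - exceedanceApprox n x|
      ≤ exp (-x) * (2 * |levelShift n x| + 4 / log n) := by
  have h_log := log_natCast_pos hn
  have h_half := half_le_one_add_levelShift hw
  have h_split : (1 + levelShift n x) * |meanExceedance n x - exceedanceApprox n x|
      ≤ exceedanceApprox n x / gumbelLevel n x ^ 2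
        + |levelShift n x| * exceedanceApprox n x := by
    calc (1 + levelShift n x) * |meanExceedance n x - exceedanceApprox n x|
        = |((1 + levelShift n x) * meanExceedance n x - exceedanceApprox n x)
            - levelShift n x * exceedanceApprox n x| := by
          rw [← abs_of_pos (one_half_pos.trans_le h_half), ← abs_mul,
            abs_of_pos (one_half_pos.trans_le h_half)]
          ring_nf
      _ ≤ _ := (abs_sub _ _).trans (add_le_add
          (abs_one_add_levelShift_mul_meanExceedance_sub_le hn (gumbelLevel_pos hn hw))
          (by rw [abs_mul, abs_of_pos (exceedanceApprox_pos n x)]))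
  have := exceedanceApprox_pos n x
  calc |meanExceedance n x - exceedanceApprox n x|
      = 2 * (1 / 2 * |meanExceedance n x - exceedanceApprox n x|) := by ring
    _ ≤ 2 * ((1 + levelShift n x) * |meanExceedance n x - exceedanceApprox n x|) := by gcongr
    _ ≤ 2 * (exceedanceApprox n x / gumbelLevel n x ^ 2
          + |levelShift n x| * exceedanceApprox n x) := by gcongr
    _ ≤ 2 * (exp (-x) / (log n / 2) + |levelShift n x| * exp (-x)) := by
        have := exceedanceApprox_le n x
        have := half_log_le_gumbelLevel_sq hn hw
        gcongr
    _ = exp (-x) * (2 * |levelShift n x| + 4 / log n) := by ring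

theorem abs_logRatio_sub_le (hn : 1 < n) {x : ℝ} (hw : |levelShift n x| ≤ 1 / 2)
    (hx : 4 * exp (-x) ≤ n) :
    |logRatio n x - (-quadTerm n x + exp (-x) * (1 - exp (-quadTerm n x)))|
      ≤ exp (-x) * (2 * |levelShift n x| + 4 / log n)
        + (2 * exp (-x) + 8 * exp (-x) ^ 2) / n := by
  have h_n : (1 : ℝ) < n := mod_cast hn
  have h_tail : n * (1 - stdNormalCDF (gumbelLevel n x)) = meanExceedance n x := rfl
  have h_le := meanExceedance_le hn hw
  have h_tail_le : 1 - stdNormalCDF (gumbelLevel n x) ≤ 1 / 2 := by nlinarith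
  have h_poisson := abs_sub_one_mul_log_one_sub_add_le h_n.le
    (sub_nonneg.2 (stdNormalCDF_le_one (gumbelLevel n x))) h_tail_le
  rw [sub_sub_cancel, h_tail] at h_poisson
  calc |logRatio n x - (-quadTerm n x + exp (-x) * (1 - exp (-quadTerm n x)))|
      = |((n - 1) * log (stdNormalCDF (gumbelLevel n x)) + meanExceedance n x)
          - (meanExceedance n x - exceedanceApprox n x)| := by
        rw [logRatio_eq hn, exceedanceApprox]
        ring_nf
    _ ≤ |(n - 1) * log (stdNormalCDF (gumbelLevel n x)) + meanExceedance n x|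
          + |meanExceedance n x - exceedanceApprox n x| := abs_sub _ _
    _ ≤ (meanExceedance n x + 2 * meanExceedance n x ^ 2) / n
          + exp (-x) * (2 * |levelShift n x| + 4 / log n) := by
        refine add_le_add (h_poisson.trans_eq ?_) (abs_meanExceedance_sub_le hn hw)
        rw [← h_tail]
        field_simp
    _ ≤ (2 * exp (-x) + 2 * (2 * exp (-x)) ^ 2) / n
          + exp (-x) * (2 * |levelShift n x| + 4 / log n) := by
        have := meanExceedance_nonneg n x
        gcongr
    _ = _ := by ring

end NormalizedMaximum

section Rate

open scoped Topology

variable {n : ℕ}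

/-- The rate of convergence of the law of `Y_n` to the Gumbel law: the value at `x = 0` of the
quadratic term of the exponent, asymptotic to `(log log n)² / (16 log n)`. -/
noncomputable def gumbelRate (n : ℕ) : ℝ := cSeq n ^ 2 / (4 * log n)

/-- The lower bounds on the sample size, satisfied eventually, under which the error estimates hold
with explicit constants. -/
structure IsAsymptoticRegime (n : ℕ) : Prop where
  four_le_log : 4 ≤ log n
  one_le_cSeq : 1 ≤ cSeq n
  cSeq_sq_le_log : cSeq n ^ 2 ≤ log n

lemma one_add_sq_le_gumbelWeight (x : ℝ) : (1 + |x|) ^ 2 ≤ gumbelWeight x := by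
  have := exp_pos (-x)
  exact pow_le_pow_left₀ (by positivity)
    (le_mul_of_one_le_right (by positivity) (by linarith)) 2

lemma le_eight_mul_gumbelWeight (x : ℝ) :
    (1 + |x|) * exp (-x) + 6 * exp (-x) + 8 * exp (-x) ^ 2 ≤ 8 * gumbelWeight x := by
  have h_one : 1 ≤ 1 + |x| := le_add_of_nonneg_right (abs_nonneg x)
  have h_exp := exp_pos (-x)
  calc (1 + |x|) * exp (-x) + 6 * exp (-x) + 8 * exp (-x) ^ 2
      = (1 + |x|) * exp (-x) + 1 * (6 * exp (-x) + 8 * exp (-x) ^ 2) := by ring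
    _ ≤ (1 + |x|) ^ 2 * exp (-x) + (1 + |x|) ^ 2 * (6 * exp (-x) + 8 * exp (-x) ^ 2) := by
      gcongr
      · exact le_self_pow₀ h_one two_ne_zero
      · exact one_le_pow₀ h_one
    _ = (1 + |x|) ^ 2 * (7 * exp (-x) + 8 * exp (-x) ^ 2) := by ring
    _ ≤ (1 + |x|) ^ 2 * (8 * (1 + exp (-x)) ^ 2) := by
      gcongr
      nlinarith
    _ = 8 * gumbelWeight x := by rw [gumbelWeight]; ring

namespace IsAsymptoticRegime

lemma one_lt (hn : IsAsymptoticRegime n) : 1 < n := by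
  have h : 1 < (n : ℝ) := (log_pos_iff n.cast_nonneg).1 (by linarith [hn.four_le_log])
  exact_mod_cast h

lemma cSeq_pos (hn : IsAsymptoticRegime n) : 0 < cSeq n := one_pos.trans_le hn.one_le_cSeq

lemma log_pos (hn : IsAsymptoticRegime n) : 0 < log n := four_pos.trans_le hn.four_le_log

lemma gumbelRate_pos (hn : IsAsymptoticRegime n) : 0 < gumbelRate n :=
  div_pos (pow_pos hn.cSeq_pos 2) (mul_pos four_pos hn.log_pos)

lemma one_le_mul_gumbelRate (hn : IsAsymptoticRegime n) : 1 ≤ 4 * log n * gumbelRate n := by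
  have := hn.log_pos
  rw [gumbelRate, mul_div_cancel₀ _ (by positivity)]
  exact one_le_pow₀ hn.one_le_cSeq

lemma abs_sub_cSeq_le (hn : IsAsymptoticRegime n) (x : ℝ) :
    |x - cSeq n| ≤ cSeq n * (1 + |x|) :=
  calc |x - cSeq n| ≤ |x| + |cSeq n| := abs_sub _ _
    _ = |x| + cSeq n := by rw [abs_of_pos hn.cSeq_pos]
    _ ≤ cSeq n * (1 + |x|) := by nlinarith [abs_nonneg x, hn.one_le_cSeq]

lemma quadTerm_le (hn : IsAsymptoticRegime n) (x : ℝ) :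
    quadTerm n x ≤ gumbelRate n * gumbelWeight x := by
  have := hn.log_pos
  calc quadTerm n x = |x - cSeq n| ^ 2 / (4 * log n) := by rw [quadTerm, sq_abs]
    _ ≤ (cSeq n * (1 + |x|)) ^ 2 / (4 * log n) := by gcongr; exact hn.abs_sub_cSeq_le x
    _ = gumbelRate n * (1 + |x|) ^ 2 := by rw [gumbelRate]; ring
    _ ≤ gumbelRate n * gumbelWeight x :=
      mul_le_mul_of_nonneg_left (one_add_sq_le_gumbelWeight x) hn.gumbelRate_pos.le

lemma abs_levelShift_le (hn : IsAsymptoticRegime n) (x : ℝ) :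
    |levelShift n x| ≤ cSeq n / (2 * log n) * (1 + |x|) := by
  have := hn.log_pos
  rw [levelShift, abs_div, abs_of_pos (a := 2 * log n) (by positivity), div_mul_eq_mul_div]
  gcongr
  exact hn.abs_sub_cSeq_le x

lemma abs_levelShift_le_half (hn : IsAsymptoticRegime n) {x : ℝ} (hx : |x| ≤ √(log n)) :
    |levelShift n x| ≤ 1 / 2 := by
  have h_log := hn.log_pos
  have h_sqrt : 2 ≤ √(log n) := le_sqrt_of_sq_le (by linarith [hn.four_le_log])
  have h_sub : |x - cSeq n| ≤ 2 * √(log n) := by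
    have h_c : |cSeq n| ≤ √(log n) := abs_le_sqrt hn.cSeq_sq_le_log
    linarith [abs_sub x (cSeq n)]
  rw [levelShift, abs_div, abs_of_pos (a := 2 * log n) (by positivity), div_le_iff₀ (by positivity)]
  nlinarith [sq_sqrt h_log.le]

lemma four_mul_exp_neg_le (hn : IsAsymptoticRegime n) {x : ℝ} (hx : |x| ≤ √(log n)) :
    4 * exp (-x) ≤ n := by
  have h_sqrt : 2 ≤ √(log n) := le_sqrt_of_sq_le (by linarith [hn.four_le_log])
  have h_exponent : 2 + -x ≤ log n := by
    nlinarith [sq_sqrt hn.log_pos.le, neg_abs_le x]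
  have h_four : 4 ≤ exp 2 := by
    have h := sq_le_sq₀ (by positivity) (by positivity) |>.2 (add_one_le_exp (1 : ℝ))
    rw [← exp_nat_mul] at h
    norm_num at h
    exact h
  calc 4 * exp (-x) ≤ exp 2 * exp (-x) := by gcongr
    _ ≤ exp (log n) := by rw [← exp_add]; exact exp_le_exp.2 h_exponent
    _ = n := exp_log (by have := hn.one_lt; positivity)

lemma abs_logRatio_sub_le_gumbelRate (hn : IsAsymptoticRegime n) {x : ℝ} (hx : |x| ≤ √(log n)) :
    |logRatio n x - (-quadTerm n x + exp (-x) * (1 - exp (-quadTerm n x)))|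
      ≤ 32 * (gumbelRate n / cSeq n) * gumbelWeight x := by
  have h_log := hn.log_pos
  have h_c := hn.cSeq_pos
  have h_one := hn.one_le_cSeq
  have h_log_le : log n ≤ n := log_le_self n.cast_nonneg
  calc |logRatio n x - (-quadTerm n x + exp (-x) * (1 - exp (-quadTerm n x)))|
      ≤ exp (-x) * (2 * |levelShift n x| + 4 / log n)
        + (2 * exp (-x) + 8 * exp (-x) ^ 2) / n :=
        abs_logRatio_sub_le hn.one_lt (hn.abs_levelShift_le_half hx)
          (hn.four_mul_exp_neg_le hx)
    _ ≤ exp (-x) * (2 * (cSeq n / (2 * log n) * (1 + |x|)) + 4 * cSeq n / log n)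
        + (2 * exp (-x) + 8 * exp (-x) ^ 2) * cSeq n / log n := by
        gcongr
        · exact hn.abs_levelShift_le x
        · linarith
        · exact le_mul_of_one_le_right (by positivity) h_one
    _ = cSeq n / log n * ((1 + |x|) * exp (-x) + 6 * exp (-x) + 8 * exp (-x) ^ 2) := by
        field_simp
        ring
    _ ≤ cSeq n / log n * (8 * gumbelWeight x) := by
        gcongr
        exact le_eight_mul_gumbelWeight x
    _ = 32 * (gumbelRate n / cSeq n) * gumbelWeight x := by
        rw [gumbelRate]
        field_simp
        ring

lemma neg_logRatio_le (hn : IsAsymptoticRegime n) {x : ℝ} (hx : |x| ≤ √(log n)) :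
    -logRatio n x ≤ gumbelRate n * (33 * gumbelWeight x) := by
  have h_err : 32 * (gumbelRate n / cSeq n) * gumbelWeight x
      ≤ 32 * gumbelRate n * gumbelWeight x := by
    have : 0 ≤ gumbelWeight x := sq_nonneg _
    gcongr
    exact div_le_self hn.gumbelRate_pos.le hn.one_le_cSeq
  have h_exp : 0 ≤ exp (-x) * (1 - exp (-quadTerm n x)) :=
    mul_nonneg (exp_pos _).le
      (sub_nonneg.2 (exp_le_one_iff.2 (neg_nonpos.2 (quadTerm_nonneg n x))))
  linarith [neg_abs_le (logRatio n x - (-quadTerm n x + exp (-x) * (1 - exp (-quadTerm n x)))),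
    hn.abs_logRatio_sub_le_gumbelRate hx, hn.quadTerm_le x]

theorem posPart_gumbelPDF_sub_fmax_le (hn : IsAsymptoticRegime n) (x : ℝ) :
    (gumbelPDF x - fmax n x)⁺ ≤ gumbelRate n * (33 * (gumbelWeight x * gumbelPDF x)) := by
  have h_g := gumbelPDF_pos x
  have h_rate := hn.gumbelRate_pos
  have h_weight : 0 ≤ gumbelWeight x := sq_nonneg _
  refine max_le ?_ (by positivity)
  rcases le_or_gt |x| (√(log n)) with hx | hx
  · calc gumbelPDF x - fmax n x = gumbelPDF x * (1 - exp (logRatio n x)) := by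
          rw [fmax_eq_gumbelPDF_mul_exp_logRatio hn.one_lt]
          ring
      _ ≤ gumbelPDF x * -logRatio n x := by
          gcongr
          linarith [add_one_le_exp (logRatio n x)]
      _ ≤ gumbelPDF x * (gumbelRate n * (33 * gumbelWeight x)) := by
          gcongr
          exact hn.neg_logRatio_le hx
      _ = gumbelRate n * (33 * (gumbelWeight x * gumbelPDF x)) := by ring
  · have h_log_le : log n ≤ gumbelWeight x := by
      have h_sq := (sqrt_lt' ((sqrt_nonneg _).trans_lt hx)).1 hx
      nlinarith [one_add_sq_le_gumbelWeight x, abs_nonneg x]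
    calc gumbelPDF x - fmax n x ≤ 1 * gumbelPDF x := by linarith [fmax_pos hn.one_lt x]
      _ ≤ 4 * log n * gumbelRate n * gumbelPDF x := by gcongr; exact hn.one_le_mul_gumbelRate
      _ ≤ 4 * gumbelWeight x * gumbelRate n * gumbelPDF x := by gcongr
      _ ≤ 33 * gumbelWeight x * gumbelRate n * gumbelPDF x := by gcongr; norm_num
      _ = gumbelRate n * (33 * (gumbelWeight x * gumbelPDF x)) := by ring

end IsAsymptoticRegime

lemma tendsto_log_natCast_atTop : Tendsto (fun n : ℕ => log n) atTop atTop :=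
  tendsto_log_atTop.comp tendsto_natCast_atTop_atTop

lemma tendsto_log_log_natCast_atTop : Tendsto (fun n : ℕ => log (log n)) atTop atTop :=
  tendsto_log_atTop.comp tendsto_log_natCast_atTop

lemma tendsto_cSeq_div_log_log :
    Tendsto (fun n : ℕ => cSeq n / log (log n)) atTop (𝓝 (1 / 2)) := by
  have h_lim : Tendsto (fun n : ℕ => 1 / 2 + log (4 * π) / 2 / log (log n)) atTop (𝓝 (1 / 2)) := by
    simpa using! tendsto_const_nhds.add (tendsto_const_nhds.div_atTop tendsto_log_log_natCast_atTop)
  refine h_lim.congr' ?_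
  filter_upwards [eventually_gt_atTop 1, tendsto_log_log_natCast_atTop.eventually_ne_atTop 0]
    with n hn hne
  rw [eq_div_iff hne]
  field_simp
  rw [two_mul_cSeq hn]

lemma tendsto_cSeq_atTop : Tendsto cSeq atTop atTop := by
  have h_sqrt := tendsto_sqrt_atTop.comp
    (tendsto_log_natCast_atTop.const_mul_atTop (by positivity : 0 < 4 * π))
  exact tendsto_log_atTop.comp h_sqrt

lemma tendsto_gumbelRate_nhds_zero : Tendsto gumbelRate atTop (𝓝 0) := by
  have h_log_log := (isLittleO_pow_log_id_atTop (n := 2)).tendsto_div_nhds_zero.comp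
    tendsto_log_natCast_atTop
  have h_mul := ((tendsto_cSeq_div_log_log.pow 2).mul h_log_log).div_const 4
  rw [mul_zero, zero_div] at h_mul
  refine h_mul.congr' ?_
  filter_upwards [tendsto_log_log_natCast_atTop.eventually_ne_atTop 0] with n hne
  simp only [Function.comp_apply, id]
  rw [gumbelRate]
  field_simp

lemma eventually_isAsymptoticRegime : ∀ᶠ n in atTop, IsAsymptoticRegime n := by
  filter_upwards [tendsto_log_natCast_atTop.eventually_ge_atTop 4,
    tendsto_cSeq_atTop.eventually_ge_atTop 1,
    tendsto_gumbelRate_nhds_zero.eventually_le_const (u := 1 / 4) (by norm_num)]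
    with n h_log h_c h_rate
  refine ⟨h_log, h_c, ?_⟩
  rw [gumbelRate, div_le_iff₀ (by positivity)] at h_rate
  linarith

lemma eventually_abs_le_sqrt_log (x : ℝ) : ∀ᶠ n : ℕ in atTop, |x| ≤ √(log n) :=
  (tendsto_sqrt_atTop.comp tendsto_log_natCast_atTop).eventually_ge_atTop |x|

lemma tendsto_gumbelRate : Tendsto gumbelRate atTop (𝓝[≠] 0) :=
  tendsto_nhdsWithin_iff.2 ⟨tendsto_gumbelRate_nhds_zero,
    eventually_isAsymptoticRegime.mono fun _ hn => hn.gumbelRate_pos.ne'⟩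

lemma tendsto_quadTerm_div_gumbelRate (x : ℝ) :
    Tendsto (fun n => quadTerm n x / gumbelRate n) atTop (𝓝 1) := by
  have h_lim : Tendsto (fun n => (x / cSeq n - 1) ^ 2) atTop (𝓝 1) := by
    simpa using (((tendsto_const_nhds (x := x)).div_atTop tendsto_cSeq_atTop).sub_const 1).pow 2
  refine h_lim.congr' ?_
  filter_upwards [eventually_isAsymptoticRegime] with n hn
  have h_log := hn.log_pos
  have h_c := hn.cSeq_pos
  rw [quadTerm, gumbelRate]
  field_simp

lemma tendsto_logRatio_div_gumbelRate (x : ℝ) :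
    Tendsto (fun n => logRatio n x / gumbelRate n) atTop (𝓝 (exp (-x) - 1)) := by
  have h_quad := (tendsto_quadTerm_div_gumbelRate x).neg
  simp only [← neg_div] at h_quad
  have h_exp := ((tendsto_exp_sub_one_div tendsto_gumbelRate h_quad).const_mul (exp (-x))).neg
  have h_err : Tendsto (fun n => (logRatio n x
      - (-quadTerm n x + exp (-x) * (1 - exp (-quadTerm n x)))) / gumbelRate n) atTop (𝓝 0) := by
    refine squeeze_zero_norm' ?_ ((tendsto_const_nhds (x := 32 * gumbelWeight x)).div_atTop
      tendsto_cSeq_atTop)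
    filter_upwards [eventually_isAsymptoticRegime, eventually_abs_le_sqrt_log x] with n hn hx
    have h_rate := hn.gumbelRate_pos
    rw [norm_div, norm_of_nonneg h_rate.le, div_le_iff₀ h_rate]
    exact (hn.abs_logRatio_sub_le_gumbelRate hx).trans_eq (by ring)
  have h_sum := (h_err.add h_quad).add h_exp
  rw [show 0 + -1 + -(exp (-x) * -1) = exp (-x) - 1 by ring] at h_sum
  refine h_sum.congr fun n => ?_
  ring

lemma tendsto_gumbelPDF_sub_fmax_div_gumbelRate (x : ℝ) :
    Tendsto (fun n => (gumbelPDF x - fmax n x) / gumbelRate n) atTop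
      (𝓝 (gumbelPDF x * (1 - exp (-x)))) := by
  have h := (tendsto_exp_sub_one_div tendsto_gumbelRate
    (tendsto_logRatio_div_gumbelRate x)).const_mul (-gumbelPDF x)
  rw [neg_mul_comm, neg_sub] at h
  refine h.congr' ?_
  filter_upwards [eventually_gt_atTop 1] with n hn
  rw [fmax_eq_gumbelPDF_mul_exp_logRatio hn]
  ring

theorem tendsto_integral_abs_fmax_sub_gumbelPDF_div_gumbelRate :
    Tendsto (fun n => (∫ x, |fmax n x - gumbelPDF x|) / gumbelRate n) atTop
      (𝓝 (2 * exp (-1))) := by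
  rw [← integral_posPart_gumbelPDF_mul_one_sub_exp_neg]
  refine tendsto_integral_abs_sub_div ?_ integrable_gumbelPDF ?_ ?_ ?_
    (integrable_gumbelWeight_mul_gumbelPDF.const_mul 33)
    (ae_of_all _ tendsto_gumbelPDF_sub_fmax_div_gumbelRate)
  · filter_upwards [eventually_gt_atTop 1] with n hn using integrable_fmax hn
  · filter_upwards [eventually_gt_atTop 1] with n hn
    rw [integral_fmax hn, integral_gumbelPDF]
  · filter_upwards [eventually_isAsymptoticRegime] with n hn using hn.gumbelRate_pos
  · filter_upwards [eventually_isAsymptoticRegime] with n hn using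
      ae_of_all _ hn.posPart_gumbelPDF_sub_fmax_le

end Rate

/-- The total variation distance between the law of the normalized Gaussian maximum
`Y_n` and the standard Gumbel distribution is `(log log n)²/(8 e log n) · (1 + o(1))`. -/
theorem tv_gumbel_max_gaussian :
    Tendsto (fun n : ℕ =>
        (∫ x : ℝ, |fmax n x - gumbelPDF x|) /
          ((Real.log (Real.log n)) ^ 2 / (8 * Real.exp 1 * Real.log n)))
      atTop (nhds 1) := by
  have h_rate := tendsto_integral_abs_fmax_sub_gumbelPDF_div_gumbelRate
  have h_lim := (h_rate.mul_const (2 * exp 1)).mul (tendsto_cSeq_div_log_log.pow 2)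
  have h_const : 2 * exp (-1) * (2 * exp 1) * (1 / 2) ^ 2 = 1 := by
    rw [exp_neg]
    field_simp
  rw [h_const] at h_lim
  refine h_lim.congr' ?_
  filter_upwards [eventually_isAsymptoticRegime] with n hn
  have h_c := hn.cSeq_pos
  have h_log := hn.log_pos
  rw [gumbelRate]
  field_simp
  ring
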